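/- There exists ε₀ > 0 such that for every ε ∈ (0, ε₀) there is a smooth injective map σ : B²(1−ε) → ℝ² satisfying: (i) det Dσ(z) = 1 for every z ∈ B²(1−ε) (σ is area-preserving); (ii) the image of σ is contained in the slit disc SD(1) := B²(1) ∖ {(x,0) : x ≥ 0}; and (iii) |σ(z)|² ≤ |z|² + ε³ for every z ∈ B²(1−ε). -/

import Mathlib

open Set

noncomputable section

/-- The open Euclidean disc of radius `r` centered at the origin of `ℝ²`. -/
def disc2 (r : ℝ) : Set (ℝ × ℝ) := {z | z.1 ^ 2 + z.2 ^ 2 < r ^ 2}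

/-- The slit disc `SD(r)`: the open disc of radius `r` with the closed nonnegative
`x`-axis removed. -/
def slitDisc (r : ℝ) : Set (ℝ × ℝ) := disc2 r \ {z | 0 ≤ z.1 ∧ z.2 = 0}


def rr (p : ℝ × ℝ) : ℝ := Real.sqrt (1 + p.1 ^ 2 + p.2 ^ 2)
def qq (p : ℝ × ℝ) : ℝ := 1 + rr p - p.1
def pp (p : ℝ × ℝ) : ℝ := Real.sqrt (qq p)
def ff (p : ℝ × ℝ) : ℝ := p.2 * (rr p - p.1) / (2 * rr p * pp p ^ 3)
def gg (p : ℝ × ℝ) : ℝ := 1 / pp p - p.2 ^ 2 / (2 * rr p * pp p ^ 3)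
def cc (p : ℝ × ℝ) : ℝ :=
  (rr p - p.1) / (2 * rr p * pp p ^ 3) + p.2 ^ 2 / (2 * rr p ^ 2 * pp p ^ 3)
   - p.2 ^ 2 * (rr p - p.1) / (2 * rr p ^ 3 * pp p ^ 3)
   - 3 * p.2 ^ 2 * (rr p - p.1) / (4 * rr p ^ 2 * pp p ^ 5)

lemma rr_sq (p) : rr p ^ 2 = 1 + p.1 ^ 2 + p.2 ^ 2 := Real.sq_sqrt (by positivity)
lemma rr_one (p) : 1 ≤ rr p := by
  unfold rr; rw [Real.one_le_sqrt]; nlinarith [sq_nonneg p.1, sq_nonneg p.2]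
lemma rr_abs1 (p) : |p.1| ≤ rr p := by
  apply Real.abs_le_sqrt; nlinarith [sq_nonneg p.2]
lemma rr_abs2 (p) : |p.2| ≤ rr p := by
  apply Real.abs_le_sqrt; nlinarith [sq_nonneg p.1]
lemma ss_nonneg (p) : 0 ≤ rr p - p.1 := by linarith [(abs_le.1 (rr_abs1 p)).2]
lemma qq_one (p) : 1 ≤ qq p := by unfold qq; linarith [ss_nonneg p]
lemma pp_sq (p) : pp p ^ 2 = 1 + rr p - p.1 := Real.sq_sqrt (by linarith [qq_one p])
lemma pp_one (p) : 1 ≤ pp p := by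
  unfold pp; rw [Real.one_le_sqrt]; exact qq_one p

lemma rr_contDiff : ContDiff ℝ (⊤ : ℕ∞) rr := by
  unfold rr
  apply ContDiff.sqrt (by fun_prop)
  intro p; positivity
lemma pp_contDiff : ContDiff ℝ (⊤ : ℕ∞) pp := by
  unfold pp
  apply ContDiff.sqrt
  · unfold qq; exact (contDiff_const.add rr_contDiff).sub contDiff_fst
  · intro p; linarith [qq_one p]
lemma ff_contDiff : ContDiff ℝ (⊤ : ℕ∞) ff := by
  unfold ff
  apply ContDiff.div
  · exact contDiff_snd.mul (rr_contDiff.sub contDiff_fst)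
  · exact (contDiff_const.mul rr_contDiff).mul (pp_contDiff.pow 3)
  · intro p; have := rr_one p; have := pp_one p; positivity
lemma gg_contDiff : ContDiff ℝ (⊤ : ℕ∞) gg := by
  unfold gg
  apply ContDiff.sub
  · exact contDiff_const.div pp_contDiff (fun p => by have := pp_one p; positivity)
  apply ContDiff.div
  · exact contDiff_snd.pow 2
  · exact (contDiff_const.mul rr_contDiff).mul (pp_contDiff.pow 3)
  · intro p; have := rr_one p; have := pp_one p; positivity

lemma rr_dx (x y : ℝ) : HasDerivAt (fun t => rr (t, y)) (x / rr (x,y)) x := by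
  have h : HasDerivAt (fun t : ℝ => 1 + t ^ 2 + y ^ 2) (2 * x) x := by
    simpa using (((hasDerivAt_id x).pow 2).const_add 1).add_const (y ^ 2)
  have := h.sqrt (by positivity)
  refine HasDerivAt.congr_deriv this ?_
  unfold rr; field_simp
lemma rr_dy (x y : ℝ) : HasDerivAt (fun t => rr (x, t)) (y / rr (x,y)) y := by
  have h : HasDerivAt (fun t : ℝ => 1 + x ^ 2 + t ^ 2) (2 * y) y := by
    simpa using (((hasDerivAt_id y).pow 2).const_add (1 + x ^ 2))
  have := h.sqrt (by positivity)
  refine HasDerivAt.congr_deriv this ?_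
  unfold rr; field_simp
lemma pp_dx (x y : ℝ) : HasDerivAt (fun t => pp (t, y)) ((x / rr (x,y) - 1) / (2 * pp (x,y))) x := by
  have h := ((rr_dx x y).const_add 1).sub (hasDerivAt_id x)
  exact h.sqrt (f := fun t => 1 + rr (t,y) - t) (by have := qq_one (x,y); unfold qq at this; simp at this ⊢; linarith)
lemma pp_dy (x y : ℝ) : HasDerivAt (fun t => pp (x, t)) ((y / rr (x,y)) / (2 * pp (x,y))) y := by
  have h := ((rr_dy x y).const_add 1).sub_const x
  exact h.sqrt (f := fun t => 1 + rr (x,t) - x) (by have := qq_one (x,y); unfold qq at this; simp at this ⊢; linarith)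

lemma ff_dy (x y : ℝ) : HasDerivAt (fun t => ff (x, t)) (cc (x,y)) y := by
  have hr := rr_one (x,y)
  have hp := pp_one (x,y)
  have h := ((hasDerivAt_id y).mul ((rr_dy x y).sub_const x)).div
    (((rr_dy x y).const_mul 2).mul ((pp_dy x y).pow 3)) (by simp; constructor <;> positivity)
  refine HasDerivAt.congr_deriv h ?_
  simp [cc]
  field_simp
  ring

lemma gg_dx (x y : ℝ) : HasDerivAt (fun t => gg (t, y)) (cc (x,y)) x := by
  have hr := rr_one (x,y)
  have hp := pp_one (x,y)
  have h := ((hasDerivAt_const x (1:ℝ)).div (pp_dx x y) (by positivity)).sub ((hasDerivAt_const x (y^2)).div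
    (((rr_dx x y).const_mul 2).mul ((pp_dx x y).pow 3)) (by simp; constructor <;> positivity))
  refine HasDerivAt.congr_deriv h ?_
  have h1 := rr_sq (x,y)
  have h2 := pp_sq (x,y)
  simp [cc] at *
  generalize rr (x,y) = r at *
  generalize pp (x,y) = p at *
  have hx : x = 1 + r - p^2 := by linarith
  field_simp
  have hy : y^2 = r^2 - 1 - x^2 := by linarith
  rw [hy, hx]
  ring

lemma cc_bound (p) : |cc p| ≤ 3 := by
  have hr := rr_one p
  have hp := pp_one p
  have h2 := pp_sq p
  have hs := ss_nonneg p
  have ha := rr_abs1 p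
  have hy : p.2^2 ≤ rr p ^ 2 := by rw [rr_sq]; nlinarith [sq_nonneg p.1]
  unfold cc
  generalize rr p = r at *
  generalize pp p = q at *
  obtain ⟨x, y⟩ := p
  simp only at *
  have hsq : r - x ≤ q ^ 2 := by linarith
  generalize r - x = s at *
  have hq3 : q^2 ≤ q^3 := pow_le_pow_right₀ hp (by norm_num)
  have hq5 : q^2 ≤ q^5 := pow_le_pow_right₀ hp (by norm_num)
  have t1 : s / (2 * r * q ^ 3) ≤ 1/2 := by
    rw [div_le_iff₀ (by positivity)]
    have : 1 * q^3 ≤ r * q^3 := by gcongr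
    linarith
  have t1' : 0 ≤ s / (2 * r * q ^ 3) := by positivity
  have t2 : y^2 / (2 * r^2 * q ^ 3) ≤ 1/2 := by
    rw [div_le_iff₀ (by positivity)]
    have : r^2 * 1 ≤ r^2 * q^3 := by gcongr; nlinarith
    linarith
  have t2' : 0 ≤ y^2 / (2 * r^2 * q ^ 3) := by positivity
  have t3 : y^2 * s / (2 * r^3 * q ^ 3) ≤ 1/2 := by
    rw [div_le_iff₀ (by positivity)]
    have : y^2 * s ≤ r^3 * q^3 := by
      apply mul_le_mul _ (hsq.trans hq3) hs (by positivity)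
      nlinarith [pow_le_pow_right₀ hr (show 2 ≤ 3 by norm_num)]
    linarith
  have t3' : 0 ≤ y^2 * s / (2 * r^3 * q ^ 3) := by positivity
  have t4 : 3 * y^2 * s / (4 * r^2 * q ^ 5) ≤ 3/4 := by
    rw [div_le_iff₀ (by positivity)]
    have : y^2 * s ≤ r^2 * q^5 := by
      apply mul_le_mul hy (hsq.trans hq5) hs (by positivity)
    linarith
  have t4' : 0 ≤ 3 * y^2 * s / (4 * r^2 * q ^ 5) := by positivity
  rw [abs_le]; constructor <;> linarith

lemma ff_bound (p) : |ff p| ≤ 1 := by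
  have hr := rr_one p
  have hp := pp_one p
  have h2 := pp_sq p
  have hs := ss_nonneg p
  have hy := rr_abs2 p
  unfold ff
  have hq3 : pp p^2 ≤ pp p^3 := pow_le_pow_right₀ hp (by norm_num)
  rw [abs_div, abs_mul, abs_of_nonneg hs, abs_of_nonneg (a := 2 * rr p * pp p ^ 3) (by positivity),
    div_le_iff₀ (by positivity)]
  have : |p.2| * (rr p - p.1) ≤ rr p * pp p ^ 3 := by
    apply mul_le_mul hy (by linarith) hs (by positivity)
  nlinarith [show 0 < rr p * pp p ^ 3 by positivity]

lemma gg_bound (p) : |gg p| ≤ 2 := by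
  have hr := rr_one p
  have hp := pp_one p
  have h2 := pp_sq p
  have hs := ss_nonneg p
  have hx := abs_le.1 (rr_abs1 p)
  have hq3 : pp p^2 ≤ pp p^3 := pow_le_pow_right₀ hp (by norm_num)
  have e : p.2^2 ≤ (rr p - p.1) * (2 * rr p) := by nlinarith [rr_sq p]
  have t1 : 1 / pp p ≤ 1 := by rw [div_le_iff₀ (by positivity)]; linarith
  have t1' : 0 ≤ 1 / pp p := by positivity
  have t2 : p.2 ^ 2 / (2 * rr p * pp p ^ 3) ≤ 1 := by
    rw [div_le_iff₀ (by positivity)]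
    have : (rr p - p.1) * (2 * rr p) ≤ pp p ^ 3 * (2 * rr p) := by gcongr; linarith
    linarith
  have t2' : 0 ≤ p.2 ^ 2 / (2 * rr p * pp p ^ 3) := by positivity
  unfold gg
  rw [abs_le]; constructor <;> linarith

lemma ff_zero (x : ℝ) : ff (x, 0) = 0 := by simp [ff]
lemma gg_zero (x : ℝ) (hx : 0 ≤ x) : 1 / 2 ≤ gg (x, 0) := by
  have hp := pp_one (x,0)
  have h2 := pp_sq (x,0)
  have hr := rr_sq (x,0)
  have hr1 := rr_one (x,0)
  simp [gg] at *
  rw [inv_le_inv₀ (by norm_num) (by positivity)]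
  have hr2 : rr (x, 0) ≤ 1 + x := by nlinarith
  nlinarith

/-- angular derivative estimate -/
lemma ang (p) : - pp p ≤ 2 * (p.1 * gg p - p.2 * ff p) := by
  have hp := pp_one p
  have h2 := pp_sq p
  have hr := rr_sq p
  have hr1 := rr_one p
  have hx := abs_le.1 (rr_abs1 p)
  have : 2 * (p.1 * gg p - p.2 * ff p) = (2 * p.1 * pp p ^ 2 - p.2 ^ 2) / pp p ^ 3 := by
    unfold gg ff; field_simp; ring
  rw [this, le_div_iff₀ (by positivity)]
  nlinarith [show -pp p * pp p ^ 3 = -(pp p ^2)^2 by ring]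

/-- partial derivatives give determinants -/
lemma det_prod (L : ℝ × ℝ →ₗ[ℝ] ℝ × ℝ) :
    LinearMap.det L = (L (1,0)).1 * (L (0,1)).2 - (L (0,1)).1 * (L (1,0)).2 := by
  rw [← LinearMap.det_toMatrix (Module.Basis.finTwoProd ℝ), Matrix.det_fin_two]
  simp [LinearMap.toMatrix_apply]

lemma partial_y {u : ℝ × ℝ → ℝ} (hu : ContDiff ℝ (⊤ : ℕ∞) u) (x y c : ℝ)
    (h : HasDerivAt (fun t => u (x, t)) c y) : fderiv ℝ u (x,y) (0,1) = c := by
  have h1 : HasFDerivAt u (fderiv ℝ u (x,y)) (x,y) := (hu.differentiable (by simp) _).hasFDerivAt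
  have h2 : HasDerivAt (fun t : ℝ => (x, t)) ((0:ℝ),(1:ℝ)) y :=
    (hasDerivAt_const y x).prodMk (hasDerivAt_id y)
  exact (h1.comp_hasDerivAt y h2).unique h
lemma partial_x {u : ℝ × ℝ → ℝ} (hu : ContDiff ℝ (⊤ : ℕ∞) u) (x y c : ℝ)
    (h : HasDerivAt (fun t => u (t, y)) c x) : fderiv ℝ u (x,y) (1,0) = c := by
  have h1 : HasFDerivAt u (fderiv ℝ u (x,y)) (x,y) := (hu.differentiable (by simp) _).hasFDerivAt
  have h2 : HasDerivAt (fun t : ℝ => (t, y)) ((1:ℝ),(0:ℝ)) x :=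
    (hasDerivAt_id x).prodMk (hasDerivAt_const x y)
  exact (h1.comp_hasDerivAt x h2).unique h

def G1 (h : ℝ) (p : ℝ × ℝ) : ℝ × ℝ := (p.1, p.2 + h * ff p)
def G2 (h : ℝ) (p : ℝ × ℝ) : ℝ × ℝ := (p.1 + h * gg p, p.2)

lemma G1_contDiff (h) : ContDiff ℝ (⊤ : ℕ∞) (G1 h) :=
  contDiff_fst.prodMk (contDiff_snd.add (contDiff_const.mul ff_contDiff))
lemma G2_contDiff (h) : ContDiff ℝ (⊤ : ℕ∞) (G2 h) :=
  (contDiff_fst.add (contDiff_const.mul gg_contDiff)).prodMk contDiff_snd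

lemma G1_det (h p) : LinearMap.det (fderiv ℝ (G1 h) p).toLinearMap = 1 + h * cc p := by
  obtain ⟨x, y⟩ := p
  have hf : HasFDerivAt ff (fderiv ℝ ff (x,y)) (x,y) :=
    (ff_contDiff.differentiable (by simp) _).hasFDerivAt
  have : HasFDerivAt (G1 h) _ (x,y) := hasFDerivAt_fst.prodMk (hasFDerivAt_snd.add (hf.const_mul h))
  rw [this.fderiv, det_prod]
  simp [partial_y ff_contDiff x y _ (ff_dy x y)]
lemma G2_det (h p) : LinearMap.det (fderiv ℝ (G2 h) p).toLinearMap = 1 + h * cc p := by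
  obtain ⟨x, y⟩ := p
  have hf : HasFDerivAt gg (fderiv ℝ gg (x,y)) (x,y) :=
    (gg_contDiff.differentiable (by simp) _).hasFDerivAt
  have : HasFDerivAt (G2 h) _ (x,y) := (hasFDerivAt_fst.add (hf.const_mul h)).prodMk hasFDerivAt_snd
  rw [this.fderiv, det_prod]
  simp [partial_x gg_contDiff x y _ (gg_dx x y)]

lemma mono_of {u : ℝ → ℝ} {c : ℝ → ℝ} (hu : ∀ t, HasDerivAt u (c t) t) (hc : ∀ t, |c t| ≤ 3)
    {h : ℝ} (h0 : 0 < h) (h1 : h ≤ 1/6) : StrictMono (fun t => t + h * u t) := by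
  have hd : ∀ t, HasDerivAt (fun t => t + h * u t) (1 + h * c t) t := fun t =>
    (hasDerivAt_id t).add ((hu t).const_mul h)
  apply strictMono_of_deriv_pos
  intro t
  rw [(hd t).deriv]
  have := (abs_le.1 (hc t)).1
  nlinarith

lemma surj_of {u : ℝ → ℝ} (hu : Continuous u) (hb : ∀ t, |u t| ≤ 2)
    {h : ℝ} (h0 : 0 < h) : Function.Surjective (fun t => t + h * u t) := by
  intro y
  have hc : Continuous (fun t => t + h * u t) := by fun_prop
  have := intermediate_value_univ (y - 2 * h) (y + 2 * h) hc
  apply this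
  have a := abs_le.1 (hb (y - 2 * h))
  have b := abs_le.1 (hb (y + 2 * h))
  constructor <;> nlinarith

lemma G1_inj {h : ℝ} (h0 : 0 < h) (h1 : h ≤ 1/6) : Function.Injective (G1 h) := by
  rintro ⟨x, y⟩ ⟨x', y'⟩ e
  simp [G1] at e
  obtain ⟨rfl, e⟩ := e
  have := (mono_of (fun t => ff_dy x t) (fun t => cc_bound _) h0 h1).injective e
  rw [this]
lemma G2_inj {h : ℝ} (h0 : 0 < h) (h1 : h ≤ 1/6) : Function.Injective (G2 h) := by
  rintro ⟨x, y⟩ ⟨x', y'⟩ e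
  simp [G2] at e
  obtain ⟨e, rfl⟩ := e
  have := (mono_of (fun t => gg_dx t y) (fun t => cc_bound _) h0 h1).injective e
  rw [this]
lemma G2_surj {h : ℝ} (h0 : 0 < h) : Function.Surjective (G2 h) := by
  rintro ⟨X, Y⟩
  obtain ⟨x, hx⟩ := surj_of (u := fun t => gg (t, Y)) (gg_contDiff.continuous.comp (by fun_prop))
    (fun t => gg_bound _) h0 X
  exact ⟨(x, Y), by simp [G2]; exact hx⟩

lemma contDiff_inverse {G I : ℝ × ℝ → ℝ × ℝ} (hG : ContDiff ℝ (⊤ : ℕ∞) G)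
    (hi : Function.Injective G) (hI : ∀ w, G (I w) = w)
    (hd : ∀ p, LinearMap.det (fderiv ℝ G p).toLinearMap ≠ 0) : ContDiff ℝ (⊤ : ℕ∞) I := by
  rw [contDiff_iff_contDiffAt]
  intro w
  let e : (ℝ × ℝ) ≃L[ℝ] (ℝ × ℝ) :=
    ((fderiv ℝ G (I w)).toLinearMap.equivOfDetNeZero (hd _)).toContinuousLinearEquiv
  have he : HasFDerivAt G (e : ℝ × ℝ →L[ℝ] ℝ × ℝ) (I w) := by
    have : (e : ℝ × ℝ →L[ℝ] ℝ × ℝ) = fderiv ℝ G (I w) := by ext <;> rfl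
    rw [this]
    exact (hG.differentiable (by simp) _).hasFDerivAt
  have hs := hG.contDiffAt (x := I w)
  have h1 := hs.to_localInverse he (by simp)
  have h2 := (hs.hasStrictFDerivAt' he (by simp)).eventually_right_inverse
  rw [hI w] at h1 h2
  refine h1.congr_of_eventuallyEq ?_
  filter_upwards [h2] with v hv
  apply hi
  rw [hI v]
  exact hv.symm

lemma det_comp {F G : ℝ × ℝ → ℝ × ℝ} (hF : ContDiff ℝ (⊤ : ℕ∞) F) (hG : ContDiff ℝ (⊤ : ℕ∞) G) (w) :
    LinearMap.det (fderiv ℝ (fun w => F (G w)) w).toLinearMap =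
      LinearMap.det (fderiv ℝ F (G w)).toLinearMap * LinearMap.det (fderiv ℝ G w).toLinearMap := by
  have := fderiv_fun_comp w (hF.differentiable (by simp) (G w)) (hG.differentiable (by simp) w)
  rw [this, ← LinearMap.det_comp]
  rfl

lemma step_exists {h : ℝ} (h0 : 0 < h) (h1 : h ≤ 1/6) : ∃ Φ : ℝ × ℝ → ℝ × ℝ,
    ContDiff ℝ (⊤ : ℕ∞) Φ ∧ Function.Injective Φ ∧
    (∀ w, LinearMap.det (fderiv ℝ Φ w).toLinearMap = 1) ∧
    ∀ w, ∃ p, w = G2 h p ∧ Φ w = G1 h p := by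
  choose I hI using G2_surj h0
  have hpos : ∀ p, 1 + h * cc p ≠ 0 := fun p => by
    have := (abs_le.1 (cc_bound p)).1
    have : 0 < 1 + h * cc p := by nlinarith
    exact this.ne'
  have hIc : ContDiff ℝ (⊤ : ℕ∞) I := contDiff_inverse (G2_contDiff h) (G2_inj h0 h1) hI
    (fun p => by rw [G2_det]; exact hpos p)
  refine ⟨fun w => G1 h (I w), (G1_contDiff h).comp hIc, ?_, ?_, fun w => ⟨I w, (hI w).symm, rfl⟩⟩
  · intro a b e
    have := G1_inj h0 h1 e
    rw [← hI a, ← hI b, this]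
  · intro w
    rw [det_comp (G1_contDiff h) hIc, G1_det, ← G2_det h, ← det_comp (G2_contDiff h) hIc]
    simp [hI]

lemma det_iter {Φ : ℝ × ℝ → ℝ × ℝ} (hc : ContDiff ℝ (⊤ : ℕ∞) Φ)
    (hd : ∀ w, LinearMap.det (fderiv ℝ Φ w).toLinearMap = 1) (n : ℕ) :
    ContDiff ℝ (⊤ : ℕ∞) Φ^[n] ∧ ∀ w, LinearMap.det (fderiv ℝ Φ^[n] w).toLinearMap = 1 := by
  induction n with
  | zero =>
    refine ⟨contDiff_id, fun w => ?_⟩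
    simp
  | succ n ih =>
    refine ⟨by rw [Function.iterate_succ']; exact hc.comp ih.1, fun w => ?_⟩
    have : Φ^[n+1] = fun w => Φ (Φ^[n] w) := by rw [Function.iterate_succ']; rfl
    rw [this, det_comp hc ih.1, hd, ih.2, one_mul]

lemma step_norm {h k : ℝ} (h0 : 0 < h) (h1 : h ≤ 1/6) (hk : 1 ≤ k) (p : ℝ × ℝ)
    (hw : (G2 h p).1 ^ 2 + (G2 h p).2 ^ 2 ≤ 4 * k ^ 4) :
    (G1 h p).1 ^ 2 + (G1 h p).2 ^ 2 ≤ (G2 h p).1 ^ 2 + (G2 h p).2 ^ 2 + 4 * h * k := by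
  have ha := ang p
  have hf := ff_bound p
  have hg := abs_le.1 (gg_bound p)
  have hf2 : ff p ^ 2 ≤ 1 := by rw [sq_le_one_iff_abs_le_one]; exact hf
  have hk2 : 1 ≤ k ^ 2 := by nlinarith
  have hp : pp p ≤ 3 * k := by
    have hX : |p.1 + h * gg p| ≤ 2 * k ^ 2 := by
      apply abs_le_of_sq_le_sq _ (by positivity)
      simp only [G2] at hw
      nlinarith [sq_nonneg p.2]
    have hX := abs_le.1 hX
    have hY : p.2 ^ 2 ≤ 4 * k ^ 4 := by
      simp only [G2] at hw
      nlinarith [sq_nonneg (p.1 + h * gg p)]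
    have hx1 : -(3 * k^2) ≤ p.1 := by nlinarith
    have hx2 : p.1 ≤ 3 * k^2 := by nlinarith
    have hr : rr p ≤ 4 * k ^ 2 := by
      apply Real.sqrt_le_iff.2
      refine ⟨by positivity, ?_⟩
      nlinarith
    have := pp_sq p
    apply le_of_sq_le_sq _ (by positivity)
    nlinarith
  simp only [G1, G2]
  have e : p.1 ^ 2 + (p.2 + h * ff p) ^ 2 = (p.1 + h * gg p) ^ 2 + p.2 ^ 2
    - h * (2 * (p.1 * gg p - p.2 * ff p)) + h^2 * (ff p ^ 2 - gg p ^ 2) := by ring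
  rw [e]
  have e1 : h * (-pp p) ≤ h * (2 * (p.1 * gg p - p.2 * ff p)) := by gcongr
  have e2 : h * pp p ≤ h * (3 * k) := by gcongr
  have e3 : h ^ 2 * (ff p ^ 2 - gg p ^ 2) ≤ h ^ 2 * 1 := by
    gcongr; nlinarith [sq_nonneg (gg p)]
  nlinarith

theorem iter_norm {h k : ℝ} (h0 : 0 < h) (h1 : h ≤ 1/6) (hk : 1 ≤ k) {Φ : ℝ × ℝ → ℝ × ℝ}
    (hΦ : ∀ w, ∃ p, w = G2 h p ∧ Φ w = G1 h p) (w : ℝ × ℝ) (n : ℕ)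
    (hw : w.1 ^ 2 + w.2 ^ 2 + n * (4 * h * k) ≤ 4 * k ^ 4) :
    (Φ^[n] w).1 ^ 2 + (Φ^[n] w).2 ^ 2 ≤ w.1 ^ 2 + w.2 ^ 2 + n * (4 * h * k) := by
  induction n with
  | zero => simp
  | succ n ih =>
    have hpos : 0 < 4 * h * k := by positivity
    push_cast at hw ⊢
    have ih := ih (by linarith)
    rw [Function.iterate_succ_apply']
    obtain ⟨p, e1, e2⟩ := hΦ (Φ^[n] w)
    have := step_norm h0 h1 hk p (by rw [← e1]; linarith)
    rw [← e1, ← e2] at this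
    linarith

theorem iter_slit {h : ℝ} (h0 : 0 < h) (h1 : h ≤ 1/6) {Φ : ℝ × ℝ → ℝ × ℝ}
    (hΦ : ∀ w, ∃ p, w = G2 h p ∧ Φ w = G1 h p) (w : ℝ × ℝ) (n : ℕ)
    (hw : 0 ≤ (Φ^[n] w).1 ∧ (Φ^[n] w).2 = 0) : n * (h / 2) ≤ w.1 ∧ w.2 = 0 := by
  induction n generalizing w with
  | zero => simpa using hw
  | succ n ih =>
    rw [Function.iterate_succ_apply] at hw
    have key := ih (Φ w) hw
    obtain ⟨⟨x, y⟩, e1, e2⟩ := hΦ w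
    rw [e2] at key
    rw [e1]
    have hy : y = 0 := by
      have : G1 h (x, y) = G1 h (x, 0) := by
        ext
        · rfl
        · rw [key.2]; simp [G1, ff_zero]
      have := G1_inj h0 h1 this
      simpa using this
    subst hy
    have kx : n * (h / 2) ≤ x := key.1
    have hx : 0 ≤ x := le_trans (by positivity) kx
    refine ⟨?_, rfl⟩
    have := gg_zero x hx
    simp only [G2]
    push_cast
    nlinarith

/-- There is `ε₀ > 0` such that for every `ε ∈ (0, ε₀)` there exists a smooth injective
area-preserving map `σ : B²(1-ε) → SD(1)` with `|σ(z)|² ≤ |z|² + ε³` on `B²(1-ε)`. -/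
theorem exists_slit_disc_embedding :
    ∃ ε₀ : ℝ, 0 < ε₀ ∧ ∀ ε : ℝ, 0 < ε → ε < ε₀ →
      ∃ σ : ℝ × ℝ → ℝ × ℝ,
        ContDiffOn ℝ (⊤ : ℕ∞) σ (disc2 (1 - ε)) ∧
        Set.InjOn σ (disc2 (1 - ε)) ∧
        (∀ z ∈ disc2 (1 - ε), σ z ∈ slitDisc 1) ∧
        (∀ z ∈ disc2 (1 - ε), LinearMap.det (fderiv ℝ σ z).toLinearMap = 1) ∧
        (∀ z ∈ disc2 (1 - ε), (σ z).1 ^ 2 + (σ z).2 ^ 2 ≤ z.1 ^ 2 + z.2 ^ 2 + ε ^ 3) := by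
  refine ⟨1, one_pos, fun ε e0 e1 => ?_⟩
  obtain ⟨k, hk⟩ : ∃ k : ℝ, k = 8 / ε ^ 3 := ⟨_, rfl⟩
  have he3 : ε ^ 3 ≤ 1 := pow_le_one₀ e0.le e1.le
  have he3' : 0 < ε ^ 3 := by positivity
  have hk3 : k * ε ^ 3 = 8 := by rw [hk]; field_simp
  have hk1 : 1 ≤ k := by rw [hk, le_div_iff₀ he3']; linarith
  have hk0 : 0 < k := by linarith
  obtain ⟨N, hN⟩ := exists_nat_ge (12 * k ^ 2)
  have hN0 : (0 : ℝ) < N := lt_of_lt_of_le (by positivity) hN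
  obtain ⟨h, hh⟩ : ∃ h : ℝ, h = 2 * k ^ 2 / N := ⟨_, rfl⟩
  have hNh : N * h = 2 * k ^ 2 := by rw [hh]; field_simp
  have h0 : 0 < h := by rw [hh]; positivity
  have h1 : h ≤ 1 / 6 := by rw [hh, div_le_iff₀ hN0]; linarith
  obtain ⟨Φ, hc, hi, hd, hΦ⟩ := step_exists h0 h1
  obtain ⟨hcN, hdN⟩ := det_iter hc hd N
  have hR : (k ^ 2) ≠ 0 := by positivity
  have hloss : N * (4 * h * k) = ε ^ 3 * k ^ 4 := by
    calc N * (4 * h * k) = (N * h) * (4 * k) := by ring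
      _ = 8 * k ^ 3 := by rw [hNh]; ring
      _ = _ := by rw [← hk3]; ring
  have hest : ∀ z ∈ disc2 (1 - ε), (((k ^ 2)⁻¹ • Φ^[N] (k ^ 2 • z)).1) ^ 2 +
      (((k ^ 2)⁻¹ • Φ^[N] (k ^ 2 • z)).2) ^ 2 ≤ z.1 ^ 2 + z.2 ^ 2 + ε ^ 3 := by
    intro z hz
    simp only [disc2, mem_setOf_eq] at hz
    have hz1 : z.1 ^ 2 + z.2 ^ 2 ≤ 1 := by nlinarith
    have e : (k ^ 2 • z).1 ^ 2 + (k ^ 2 • z).2 ^ 2 = k ^ 4 * (z.1 ^ 2 + z.2 ^ 2) := by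
      simp; ring
    have hk4 : 0 < k ^ 4 := by positivity
    have := iter_norm h0 h1 hk1 hΦ (k ^ 2 • z) N (by rw [hloss, e]; nlinarith)
    rw [hloss, e] at this
    have e' : (((k ^ 2)⁻¹ • Φ^[N] (k ^ 2 • z)).1) ^ 2 + (((k ^ 2)⁻¹ • Φ^[N] (k ^ 2 • z)).2) ^ 2
       = ((Φ^[N] (k ^ 2 • z)).1 ^ 2 + (Φ^[N] (k ^ 2 • z)).2 ^ 2) / k ^ 4 := by
      simp only [Prod.smul_fst, Prod.smul_snd, smul_eq_mul]; field_simp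
    rw [e', div_le_iff₀ hk4]
    linarith
  have hs1 : ContDiff ℝ (⊤ : ℕ∞) (fun z : ℝ × ℝ => k ^ 2 • z) := contDiff_const_smul _
  refine ⟨fun z => (k ^ 2)⁻¹ • Φ^[N] (k ^ 2 • z), ?_, ?_, ?_, ?_, hest⟩
  · exact ((hcN.comp hs1).const_smul _).contDiffOn
  · intro a _ b _ e
    have e := smul_right_injective (ℝ × ℝ) (inv_ne_zero hR) e
    exact smul_right_injective (ℝ × ℝ) hR (hi.iterate N e)
  · intro z hz
    refine ⟨?_, ?_⟩
    · have := hest z hz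
      simp only [disc2, mem_setOf_eq] at hz ⊢
      have : ε ^ 3 ≤ ε := by nlinarith [mul_pos e0 e0, pow_le_one₀ (n := 2) e0.le e1.le]
      nlinarith
    · rintro ⟨hx, hy⟩
      simp only [Prod.smul_fst, Prod.smul_snd, smul_eq_mul] at hx hy
      have hx' : 0 ≤ (Φ^[N] (k ^ 2 • z)).1 := by
        rwa [mul_nonneg_iff_of_pos_left (by positivity)] at hx
      have hy' : (Φ^[N] (k ^ 2 • z)).2 = 0 := by
        rcases mul_eq_zero.1 hy with h | h
        · exact absurd h (inv_ne_zero hR)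
        · exact h
      have := (iter_slit h0 h1 hΦ _ N ⟨hx', hy'⟩).1
      simp only [Prod.smul_fst, smul_eq_mul] at this
      have h3 : k ^ 2 * 1 ≤ k ^ 2 * z.1 := by linarith
      have h4 := le_of_mul_le_mul_left h3 (by positivity)
      simp only [disc2, mem_setOf_eq] at hz
      nlinarith [sq_nonneg z.2]
  · intro z _
    have hs2 : HasFDerivAt (fun z : ℝ × ℝ => k ^ 2 • z) (k ^ 2 • ContinuousLinearMap.id ℝ (ℝ × ℝ)) z :=
      HasFDerivAt.const_smul (f := fun z : ℝ × ℝ => z) (hasFDerivAt_id z) (k ^ 2)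
    have hF : HasFDerivAt Φ^[N] (fderiv ℝ Φ^[N] (k ^ 2 • z)) (k ^ 2 • z) :=
      (hcN.differentiable (by simp) _).hasFDerivAt
    have hh := (hF.comp z hs2).const_smul ((k ^ 2)⁻¹)
    have hh' : HasFDerivAt (fun z => (k ^ 2)⁻¹ • Φ^[N] (k ^ 2 • z)) (fderiv ℝ Φ^[N] (k ^ 2 • z)) z := by
      refine hh.congr_fderiv ?_
      rw [ContinuousLinearMap.comp_smul, smul_smul, inv_mul_cancel₀ hR, one_smul,
        ContinuousLinearMap.comp_id]
    rw [hh'.fderiv]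
    exact hdN _
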